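/- For all integers k ≥ 1, R ≥ 1 and n with 0 ≤ n < R, the matrix integral I_k(n;R) equals the binomial coefficient C(n + k² − 1, k² − 1). -/

import Mathlib

open MeasureTheory Polynomial

noncomputable instance (R : ℕ) : MeasurableSpace (Matrix.unitaryGroup (Fin R) ℂ) := borel _
instance (R : ℕ) : BorelSpace (Matrix.unitaryGroup (Fin R) ℂ) := ⟨rfl⟩

/-- The trace of the `j`-th exterior power of `θ`, i.e. the coefficient of `T^j` in
`det(I + T·θ)`. -/
noncomputable def extPowTrace (R : ℕ) (θ : Matrix.unitaryGroup (Fin R) ℂ) (j : ℕ) : ℂ :=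
  ((1 + (X : ℂ[X]) • (θ : Matrix (Fin R) (Fin R) ℂ).map C).det).coeff j

/-- The matrix integral `I_k(n;R)`: the integral over the unitary group `U(R)` of
`|∑_{n₁+⋯+n_k=n} ∏ᵢ Tr(Λ^{nᵢ} θ)|²`, with respect to the measure `μ` (which in the
theorems below is assumed to be the Haar probability measure). The summands with some
`nᵢ > R` vanish, since `det(I + T·θ)` has degree `R`. -/
noncomputable def matrixIntegral (k n R : ℕ)
    (μ : Measure (Matrix.unitaryGroup (Fin R) ℂ)) : ℝ :=
  ∫ θ, ‖∑ x ∈ Finset.Nat.antidiagonalTuple k n, ∏ i, extPowTrace R θ (x i)‖ ^ 2 ∂μ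

/-!
The expansion of `det (1 + T θ) ^ k = det (1 + T (θ ⊗ 1_k))` in principal minors turns `n!` times
its `n`-th coefficient into the sum over the permutations `σ` of `n` letters of
`sign σ * tr (σ | (ℂ^k)^{⊗ n}) * tr (σ θ^{⊗ n} | (ℂ^R)^{⊗ n})`.
Averaging `θ^{⊗ n} E θ^{-⊗ n}` over `θ` lands in the commutant of the unitary group, and for `n ≤ R`
an element of this commutant is determined by its entries at the rearrangements of one word with
distinct letters. Hence the inner product of the functions `tr (σ θ^{⊗ n})` and `tr (τ θ^{⊗ n})` is
the number of `π` with `σ π = π τ`, and the mean square of `∑ σ, f σ * tr (σ θ^{⊗ n})` is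
`n! * ∑ σ, |f σ|^2` for every class function `f`. For `f σ = sign σ * tr (σ | (ℂ^k)^{⊗ n})` the
value `|f σ|^2` counts the words in `k^2` letters fixed by `σ`, so by orbit counting the sum is `n!`
times the number of multisets of `n` elements out of `k^2`.
-/

section Colorings

variable {ι α : Type*} [Fintype ι]

/-- The multiset of values of a coloring `c : ι → α`, as an element of the symmetric power of `α`.
It classifies the orbits of the permutations of `ι` acting on colorings. -/
def valueSym (c : ι → α) : Sym α (Fintype.card ι) :=
  ⟨Finset.univ.val.map c, by simp⟩

theorem valueSym_eq_valueSym_iff_card [DecidableEq α] {c d : ι → α} :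
    valueSym c = valueSym d ↔
      ∀ x, Fintype.card {i // c i = x} = Fintype.card {i // d i = x} := by
  rw [← Sym.coe_inj, Multiset.ext]
  simp [valueSym, Multiset.count_map, Fintype.card_subtype, Finset.card_def, eq_comm]

theorem valueSym_eq_valueSym_iff_exists_perm {c d : ι → α} :
    valueSym c = valueSym d ↔ ∃ π : Equiv.Perm ι, c = d ∘ π := by
  classical
  constructor
  · intro h
    have hcount := valueSym_eq_valueSym_iff_card.1 h
    let e (x : α) : {i // c i = x} ≃ {i // d i = x} := Fintype.equivOfCardEq (hcount x)
    refine ⟨(Equiv.sigmaFiberEquiv c).symm.trans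
      ((Equiv.sigmaCongrRight e).trans (Equiv.sigmaFiberEquiv d)), ?_⟩
    funext i
    exact (e (c i) ⟨i, rfl⟩).2.symm
  · rintro ⟨π, rfl⟩
    refine Subtype.ext ?_
    simp only [valueSym]
    rw [← Multiset.map_map, Multiset.map_univ_val_equiv]

theorem valueSym_surjective : Function.Surjective (valueSym : (ι → α) → _) := by
  classical
  rintro ⟨m, hm⟩
  let e : ι ≃ m := Fintype.equivOfCardEq (by rw [Multiset.card_coe, hm])
  refine ⟨fun i => (e i).fst, Subtype.ext ?_⟩
  change Finset.univ.val.map ((fun x : m => x.fst) ∘ e) = m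
  rw [← Multiset.map_map, Multiset.map_univ_val_equiv, Multiset.map_univ_coe]

theorem sum_card_comp_eq_self [DecidableEq ι] [Fintype α] [DecidableEq α] :
    ∑ σ : Equiv.Perm ι, Fintype.card {c : ι → α // c ∘ σ = c}
      = (Fintype.card ι).factorial * (Fintype.card α).multichoose (Fintype.card ι) := by
  classical
  let G := (Equiv.Perm ι)ᵈᵐᵃ
  let : Fintype G := Fintype.ofEquiv _ DomMulAct.mk
  have horbit (c d : ι → α) :
      MulAction.orbitRel G (ι → α) c d ↔ valueSym c = valueSym d := by
    rw [MulAction.orbitRel_apply, MulAction.mem_orbit_iff,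
      valueSym_eq_valueSym_iff_exists_perm]
    exact DomMulAct.mk.symm.exists_congr fun g => eq_comm
  have hquot : MulAction.orbitRel.Quotient G (ι → α) ≃ Sym α (Fintype.card ι) :=
    (Quotient.congrRight (r' := Setoid.ker valueSym) horbit).trans
      (Setoid.quotientKerEquivOfSurjective valueSym valueSym_surjective)
  calc ∑ σ : Equiv.Perm ι, Fintype.card {c : ι → α // c ∘ σ = c}
      = ∑ g : G, Fintype.card (MulAction.fixedBy (ι → α) g) :=
        Fintype.sum_equiv DomMulAct.mk _ _ fun σ => Fintype.card_congr (Equiv.refl _)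
    _ = Fintype.card (MulAction.orbitRel.Quotient G (ι → α)) * Fintype.card G :=
        MulAction.sum_card_fixedBy_eq_card_orbits_mul_card_group G (ι → α)
    _ = _ := by
        rw [Fintype.card_congr hquot, Sym.card_sym_eq_multichoose, mul_comm,
          ← Fintype.card_congr (DomMulAct.mk (M := Equiv.Perm ι)), Fintype.card_perm]

end Colorings

section Minors

variable {ι I A : Type*} [Fintype ι] [DecidableEq I]

theorem exists_equiv_of_image_univ_eq {a : ι → I} {s : Finset I} (ha : Finset.univ.image a = s)
    (hs : s.card = Fintype.card ι) : ∃ e : ι ≃ s, a = fun i => (e i : I) := by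
  have hmem (i : ι) : a i ∈ s := ha ▸ Finset.mem_image_of_mem a (Finset.mem_univ i)
  have hsurj : Function.Surjective fun i => (⟨a i, hmem i⟩ : s) := by
    rintro ⟨x, hx⟩
    obtain ⟨i, -, rfl⟩ := Finset.mem_image.1 (ha ▸ hx)
    exact ⟨i, rfl⟩
  exact ⟨.ofBijective _
    ((Fintype.bijective_iff_surjective_and_card _).2 ⟨hsurj, by simp [hs]⟩), rfl⟩

theorem card_filter_image_univ_eq [DecidableEq ι] [Fintype I] {s : Finset I}
    (hs : s.card = Fintype.card ι) :
    (Finset.univ.filter fun a : ι → I => Finset.univ.image a = s).card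
      = (Fintype.card ι).factorial := by
  rw [← Fintype.card_equiv (Fintype.equivOfCardEq (by simp [hs]) : ι ≃ s), ← Finset.card_univ]
  symm
  refine Finset.card_nbij (fun e i => (e i : I)) (fun e _ => ?_) (fun e _ e' _ h => ?_)
    fun a ha => ?_
  · suffices Finset.univ.image (fun i => (e i : I)) = s by simpa
    ext x
    simpa using ⟨fun ⟨i, hi⟩ => hi ▸ (e i).2, fun hx => ⟨e.symm ⟨x, hx⟩, by simp⟩⟩
  · exact Equiv.ext fun i => Subtype.ext (congrFun h i)
  · obtain ⟨e, rfl⟩ := exists_equiv_of_image_univ_eq (by simpa using ha) hs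
    exact ⟨e, by simp, rfl⟩

theorem sum_det_submatrix_eq_factorial_mul_sum_minors [DecidableEq ι] [Fintype I]
    [CommRing A] (M : Matrix I I A) :
    ∑ a : ι → I, (M.submatrix a a).det
      = (Fintype.card ι).factorial * ∑ s ∈ Finset.univ.powersetCard (Fintype.card ι),
          (M.submatrix (Subtype.val : s → I) (Subtype.val : s → I)).det := by
  have hsmall (a : ι → I) (ha : (M.submatrix a a).det ≠ 0) :
      Finset.univ.image a ∈ Finset.univ.powersetCard (Fintype.card ι) := by
    have hinj : Function.Injective a := fun i j hij => by
      by_contra hne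
      exact ha (Matrix.det_zero_of_row_eq hne (by ext; simp [hij]))
    simp [Finset.card_image_of_injective _ hinj]
  have hdet {s : Finset I} (hs : s.card = Fintype.card ι) {a : ι → I}
      (ha : Finset.univ.image a = s) : (M.submatrix a a).det
        = (M.submatrix (Subtype.val : s → I) (Subtype.val : s → I)).det := by
    obtain ⟨e, rfl⟩ := exists_equiv_of_image_univ_eq ha hs
    exact Matrix.det_submatrix_equiv_self e (M.submatrix Subtype.val Subtype.val)
  rw [← Finset.sum_filter_of_ne fun a _ => hsmall a,
    ← Finset.sum_fiberwise_of_maps_to (g := fun a : ι → I => Finset.univ.image a)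
      fun a ha => (Finset.mem_filter.1 ha).2, Finset.mul_sum]
  refine Finset.sum_congr rfl fun s hs => ?_
  have hcard : s.card = Fintype.card ι := (Finset.mem_powersetCard.1 hs).2
  rw [Finset.filter_filter, Finset.filter_congr (q := fun a => Finset.univ.image a = s)
    fun a _ => ⟨And.right, fun ha => ⟨ha ▸ hs, ha⟩⟩,
    Finset.sum_congr rfl fun a ha => hdet hcard (Finset.mem_filter.1 ha).2, Finset.sum_const,
    card_filter_image_univ_eq hcard, nsmul_eq_mul]

end Minors

theorem sum_antidiagonalTuple_prod_coeff {A : Type*} [CommSemiring A] (p : A[X]) (k n : ℕ) :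
    ∑ x ∈ Finset.Nat.antidiagonalTuple k n, ∏ i, p.coeff (x i) = (p ^ k).coeff n := by
  rw [← Polynomial.coeff_coe, Polynomial.coe_pow, ← Fin.prod_const, PowerSeries.coeff_prod]
  refine Finset.sum_equiv Finsupp.equivFunOnFinite.symm (fun x => ?_) fun x _ => ?_
  · simp [Finset.Nat.mem_antidiagonalTuple, Finset.mem_finsuppAntidiag]
  · simp

section TensorPower

variable {ι κ A : Type*} [Fintype ι] [DecidableEq ι] [Fintype κ] [DecidableEq κ]

section CommSemiring

variable [CommSemiring A]

/-- The matrix of `M^{⊗ ι}` in the standard basis of `(A^κ)^{⊗ ι}`, which is indexed by the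
functions `ι → κ`. -/
def tensorPower (ι : Type*) [Fintype ι] [DecidableEq ι] :
    Matrix κ κ A →* Matrix (ι → κ) (ι → κ) A where
  toFun M := Matrix.of fun a b => ∏ i, M (a i) (b i)
  map_one' := by
    ext a b
    simp [Matrix.one_apply, Finset.prod_ite_zero, funext_iff]
  map_mul' M N := by
    ext a b
    simp only [Matrix.of_apply, Matrix.mul_apply, ← Finset.prod_mul_distrib]
    rw [Finset.prod_univ_sum, Fintype.piFinset_univ]

theorem tensorPower_apply (M : Matrix κ κ A) (a b : ι → κ) :
    tensorPower ι M a b = ∏ i, M (a i) (b i) := rfl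

theorem tensorPower_one_apply (a b : ι → κ) :
    tensorPower ι (1 : Matrix κ κ A) a b = if a = b then 1 else 0 := by
  rw [map_one, Matrix.one_apply]

theorem tensorPower_diagonal (t : κ → A) :
    tensorPower ι (Matrix.diagonal t) = Matrix.diagonal fun a => ∏ i, t (a i) := by
  ext a b
  simp [tensorPower_apply, Matrix.diagonal_apply, Finset.prod_ite_zero, funext_iff]

theorem tensorPower_submatrix (M : Matrix κ κ A) (φ ψ : κ → κ) :
    tensorPower ι (M.submatrix φ ψ) = (tensorPower ι M).submatrix (φ ∘ ·) (ψ ∘ ·) := rfl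

theorem tensorPower_apply_comp_perm (M : Matrix κ κ A) (a b : ι → κ) (π : Equiv.Perm ι) :
    tensorPower ι M (a ∘ π) (b ∘ π) = tensorPower ι M a b :=
  Equiv.prod_comp π fun i => M (a i) (b i)

theorem tensorPower_star [StarRing A] (M : Matrix κ κ A) :
    tensorPower ι (star M) = star (tensorPower ι M) := by
  ext a b
  simp [tensorPower_apply, Matrix.star_apply]

theorem sum_tensorPower_comp_perm_mul_star [StarRing A] {U : Matrix κ κ A} (hU : U * star U = 1)
    {u : ι → κ} (hu : Function.Injective u) (π ρ : Equiv.Perm ι) :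
    ∑ d : ι → κ, tensorPower ι U u (d ∘ ρ) * star (tensorPower ι U (u ∘ π) d)
      = if ρ⁻¹ = π then 1 else 0 := by
  have hmove (d : ι → κ) : tensorPower ι U u (d ∘ ρ) = tensorPower ι U (u ∘ ⇑ρ⁻¹) d := by
    have hcomp : (u ∘ ⇑ρ⁻¹) ∘ ρ = u := by
      funext i
      simp
    rw [← tensorPower_apply_comp_perm U _ d ρ, hcomp]
  calc ∑ d : ι → κ, tensorPower ι U u (d ∘ ρ) * star (tensorPower ι U (u ∘ π) d)
      = (tensorPower ι U * star (tensorPower ι U)) (u ∘ ⇑ρ⁻¹) (u ∘ π) := by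
        simp only [hmove, Matrix.mul_apply, Matrix.star_apply]
    _ = if u ∘ ⇑ρ⁻¹ = u ∘ π then 1 else 0 := by
        rw [← tensorPower_star, ← map_mul, hU, tensorPower_one_apply]
    _ = if ρ⁻¹ = π then 1 else 0 := by
        simp only [hu.comp_left.eq_iff, DFunLike.coe_fn_eq]

/-- The trace of `M^{⊗ ι}` composed with the operator permuting the tensor factors by `σ`: the
product of the power sums `tr (M ^ l)` over the cycle lengths `l` of `σ`. -/
def permTrace (σ : Equiv.Perm ι) (M : Matrix κ κ A) : A :=
  ∑ a : ι → κ, tensorPower ι M (a ∘ σ) a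

theorem permTrace_one (σ : Equiv.Perm ι) :
    permTrace σ (1 : Matrix κ κ A) = Fintype.card {a : ι → κ // a ∘ σ = a} := by
  simp [permTrace, tensorPower_one_apply, Fintype.card_subtype]

theorem sum_permTrace_one :
    ∑ σ : Equiv.Perm ι, permTrace σ (1 : Matrix κ κ A)
      = (Fintype.card ι).factorial * (Fintype.card κ).multichoose (Fintype.card ι) := by
  simp only [permTrace_one]
  exact_mod_cast congrArg (Nat.cast (R := A)) (sum_card_comp_eq_self (ι := ι) (α := κ))

open scoped Kronecker in
theorem permTrace_kronecker {l : Type*} [Fintype l] [DecidableEq l] (σ : Equiv.Perm ι)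
    (M : Matrix κ κ A) (N : Matrix l l A) :
    permTrace σ (M ⊗ₖ N) = permTrace σ M * permTrace σ N := by
  simp only [permTrace, Finset.sum_mul_sum, ← Fintype.sum_prod_type']
  refine Fintype.sum_equiv (Equiv.arrowProdEquivProdArrow ι (fun _ => κ) fun _ => l) _ _ fun a => ?_
  simp only [tensorPower_apply, ← Finset.prod_mul_distrib]
  rfl

theorem permTrace_one_prod (σ : Equiv.Perm ι) :
    permTrace σ (1 : Matrix (κ × κ) (κ × κ) A) = permTrace σ (1 : Matrix κ κ A) ^ 2 := by
  rw [← Matrix.one_kronecker_one, permTrace_kronecker, sq]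

theorem permTrace_conj (σ π : Equiv.Perm ι) (M : Matrix κ κ A) :
    permTrace (π * σ * π⁻¹) M = permTrace σ M := by
  refine Fintype.sum_equiv (π.symm.arrowCongr (Equiv.refl κ)) _ _ fun a => ?_
  change _ = tensorPower ι M ((a ∘ π) ∘ σ) (a ∘ π)
  have hcomp : (a ∘ ⇑(π * σ * π⁻¹)) ∘ ⇑π = (a ∘ ⇑π) ∘ ⇑σ := by
    funext i
    simp
  rw [← tensorPower_apply_comp_perm M _ a π, hcomp]

theorem continuous_tensorPower [TopologicalSpace A] [ContinuousMul A] :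
    Continuous (tensorPower ι : Matrix κ κ A → Matrix (ι → κ) (ι → κ) A) :=
  continuous_matrix fun a b =>
    continuous_finsetProd _ fun i _ => continuous_id.matrix_elem (a i) (b i)

theorem continuous_permTrace [TopologicalSpace A] [IsTopologicalSemiring A] (σ : Equiv.Perm ι) :
    Continuous (permTrace σ : Matrix κ κ A → A) :=
  continuous_finsetSum _ fun a _ => continuous_tensorPower.matrix_elem (a ∘ σ) a

end CommSemiring

theorem sum_sign_mul_permTrace [CommRing A] (M : Matrix κ κ A) :
    ∑ σ : Equiv.Perm ι, (Equiv.Perm.sign σ : A) * permTrace σ M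
      = ∑ a : ι → κ, (M.submatrix a a).det := by
  simp only [Matrix.det_apply', permTrace, Finset.mul_sum]
  exact Finset.sum_comm

theorem factorial_mul_coeff_det_one_add_X_smul [CommRing A] (M : Matrix κ κ A) (n : ℕ) :
    (n.factorial : A) * ((1 + (X : A[X]) • M.map C).det).coeff n
      = ∑ σ : Equiv.Perm (Fin n), (Equiv.Perm.sign σ : A) * permTrace σ M := by
  rw [sum_sign_mul_permTrace, sum_det_submatrix_eq_factorial_mul_sum_minors]
  simp [Matrix.coeff_det_one_add_X_smul_eq_sum_minors]

open scoped Kronecker in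
theorem det_one_add_X_smul_pow_card (l : Type*) [Fintype l] [DecidableEq l] [CommRing A]
    (M : Matrix κ κ A) :
    (1 + (X : A[X]) • M.map C).det ^ Fintype.card l
      = (1 + (X : A[X]) • (M ⊗ₖ (1 : Matrix l l A)).map C).det := by
  have hkron : 1 + (X : A[X]) • (M ⊗ₖ (1 : Matrix l l A)).map C
      = (1 + (X : A[X]) • M.map C) ⊗ₖ (1 : Matrix l l A[X]) := by
    have hmap : (M ⊗ₖ (1 : Matrix l l A)).map C
        = M.map C ⊗ₖ (1 : Matrix l l A[X]) := by
      ext1 i j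
      simp [Matrix.one_apply, apply_ite C]
    rw [hmap, Matrix.add_kronecker, Matrix.one_kronecker_one, Matrix.smul_kronecker]
  simp [hkron, Matrix.det_kronecker]

end TensorPower

theorem sum_sum_mul_card_conj {G A : Type*} [Group G] [Fintype G] [DecidableEq G] [CommSemiring A]
    {f : G → A} (hf : ∀ σ π, f (π * σ * π⁻¹) = f σ) (g : G → A) :
    ∑ σ, ∑ τ, f σ * g τ * (Fintype.card {π : G // σ * π = π * τ} : A)
      = Fintype.card G * ∑ σ, f σ * g σ := by
  calc ∑ σ, ∑ τ, f σ * g τ * (Fintype.card {π : G // σ * π = π * τ} : A)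
      = ∑ τ, ∑ σ, ∑ π : G, if σ = π * τ * π⁻¹ then f σ * g τ else 0 := by
        rw [Finset.sum_comm]
        simp [Fintype.card_subtype, eq_mul_inv_iff_mul_eq, ← Finset.sum_filter, mul_comm]
    _ = ∑ τ, ∑ π : G, f (π * τ * π⁻¹) * g τ := by
        refine Finset.sum_congr rfl fun τ _ => ?_
        rw [Finset.sum_comm]
        simp
    _ = Fintype.card G * ∑ σ, f σ * g σ := by
        simp [hf, Finset.mul_sum]

section Unitary

open scoped InnerProductSpace in
theorem exists_orthonormalBasis_eq_norm_smul {κ 𝕜 E : Type*} [Fintype κ] [RCLike 𝕜]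
    [NormedAddCommGroup E] [InnerProductSpace 𝕜 E] [FiniteDimensional 𝕜 E]
    (hcard : Module.finrank 𝕜 E = Fintype.card κ) {v : κ → E}
    (hv : Pairwise fun i j => ⟪v i, v j⟫_𝕜 = 0) :
    ∃ b : OrthonormalBasis κ 𝕜 E, ∀ i, v i = (‖v i‖ : 𝕜) • b i := by
  let s : Set κ := {i | v i ≠ 0}
  have hortho : Orthonormal 𝕜 (s.domRestrict fun i => (‖v i‖⁻¹ : 𝕜) • v i) := by
    refine ⟨fun i => norm_smul_inv_norm i.2, fun i j hij => ?_⟩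
    simp [inner_smul_left, inner_smul_right, hv (Subtype.coe_ne_coe.2 hij)]
  obtain ⟨b, hb⟩ := hortho.exists_orthonormalBasis_extension_of_card_eq hcard
  refine ⟨b, fun i => ?_⟩
  by_cases hi : v i = 0
  · simp [hi]
  · have : (‖v i‖ : 𝕜) ≠ 0 := by simpa using hi
    rw [hb i hi, smul_inv_smul₀ this]

theorem exists_eq_unitary_mul_diagonal {κ 𝕜 : Type*} [Fintype κ] [DecidableEq κ] [RCLike 𝕜]
    {M : Matrix κ κ 𝕜} (hM : (star M * M).IsDiag) :
    ∃ (U : Matrix.unitaryGroup κ 𝕜) (d : κ → 𝕜), M = U * Matrix.diagonal d := by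
  let col (j : κ) : EuclideanSpace 𝕜 κ := WithLp.toLp 2 (M.col j)
  have hcol : Pairwise fun i j => inner 𝕜 (col i) (col j) = 0 := fun i j hij => by
    rw [← hM hij]
    simp [col, PiLp.inner_apply, Matrix.mul_apply, mul_comm]
  obtain ⟨b, hb⟩ := exists_orthonormalBasis_eq_norm_smul (by simp) hcol
  refine ⟨⟨_, (EuclideanSpace.basisFun κ 𝕜).toMatrix_orthonormalBasis_mem_unitary b⟩,
    fun j => ‖col j‖, ?_⟩
  ext i j
  have := congrArg (fun x : EuclideanSpace 𝕜 κ => x i) (hb j)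
  simpa [col, Module.Basis.toMatrix_apply, mul_comm, RCLike.real_smul_eq_coe_mul] using this

theorem isDiag_star_mul_one_submatrix {κ A : Type*} [Fintype κ] [DecidableEq κ] [Semiring A]
    [StarRing A] (φ : κ → κ) :
    (star ((1 : Matrix κ κ A).submatrix φ id) * (1 : Matrix κ κ A).submatrix φ id).IsDiag := by
  intro i j hij
  rw [Matrix.mul_apply]
  refine Finset.sum_eq_zero fun l _ => ?_
  by_cases hl : φ l = i <;> simp [Matrix.star_apply, Matrix.one_apply, hl, hij]

theorem diagonal_mem_unitaryGroup {κ 𝕜 : Type*} [Fintype κ] [DecidableEq κ] [RCLike 𝕜]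
    {t : κ → 𝕜} (ht : ∀ l, ‖t l‖ = 1) : Matrix.diagonal t ∈ Matrix.unitaryGroup κ 𝕜 := by
  rw [Matrix.mem_unitaryGroup_iff, Matrix.star_eq_conjTranspose, Matrix.diagonal_conjTranspose,
    Matrix.diagonal_mul_diagonal, ← Matrix.diagonal_one]
  congr 1
  ext l
  simp [RCLike.mul_conj, ht]

theorem compactSpace_unitary {E : Type*} [NormedRing E] [StarRing E] [CStarRing E]
    [ProperSpace E] : CompactSpace (unitary E) := by
  refine isCompact_iff_compactSpace.1 ((isCompact_closedBall (0 : E) 1).of_isClosed_subset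
    isClosed_unitary fun U hU => ?_)
  rw [mem_closedBall_zero_iff]
  cases subsingleton_or_nontrivial E
  · simp [Subsingleton.elim U 0]
  · exact (CStarRing.norm_of_mem_unitary hU).le

open scoped Matrix.Norms.L2Operator in
instance (κ : Type*) [Fintype κ] [DecidableEq κ] : CompactSpace (Matrix.unitaryGroup κ ℂ) :=
  compactSpace_unitary

theorem integrable_of_continuous_of_compactSpace {X E : Type*} [TopologicalSpace X]
    [CompactSpace X] [MeasurableSpace X] [BorelSpace X] [NormedAddCommGroup E]
    (μ : Measure X) [IsFiniteMeasureOnCompacts μ] {f : X → E} (hf : Continuous f) :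
    Integrable f μ :=
  hf.integrable_of_hasCompactSupport (.of_compactSpace f)

theorem commute_integral_conj {G A : Type*} [Group G] [MeasurableSpace G] [MeasurableMul G]
    [NormedRing A] [NormedAlgebra ℝ A] (μ : Measure G) [μ.IsMulLeftInvariant]
    (ρ : G →* A) {a : A} (hint : Integrable (fun g => ρ g * a * ρ g⁻¹) μ) (h : G) :
    Commute (∫ g, ρ g * a * ρ g⁻¹ ∂μ) (ρ h) := by
  symm
  calc ρ h * ∫ g, ρ g * a * ρ g⁻¹ ∂μ
      = ∫ g, ρ h * (ρ g * a * ρ g⁻¹) ∂μ := (integral_const_mul_of_integrable hint).symm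
    _ = ∫ g, ρ (h * g) * a * ρ (h * g)⁻¹ * ρ h ∂μ := by
        congr with g
        simp only [map_mul, mul_inv_rev, mul_assoc, ← map_mul ρ h⁻¹, inv_mul_cancel, map_one,
          mul_one]
    _ = (∫ g, ρ (h * g) * a * ρ (h * g)⁻¹ ∂μ) * ρ h :=
        integral_mul_const_of_integrable (hint.comp_mul_left h)
    _ = (∫ g, ρ g * a * ρ g⁻¹ ∂μ) * ρ h := by
        rw [integral_mul_left_eq_self fun g => ρ g * a * ρ g⁻¹]

end Unitary

section SchurWeyl

variable {ι κ : Type*} [Fintype ι] [DecidableEq ι] [Fintype κ] [DecidableEq κ]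
  {Y : Matrix (ι → κ) (ι → κ) ℂ}

/-- A primitive `(n + 1)`-st root of unity at position `x` of a diagonal unitary matrix detects how
often the letter `x` occurs in a word of length `n`. -/
theorem exists_perm_of_commute_tensorPower_unitary
    (hY : ∀ U : Matrix.unitaryGroup κ ℂ, Commute Y (tensorPower ι U.1)) {a b : ι → κ}
    (hab : Y a b ≠ 0) : ∃ π : Equiv.Perm ι, a = b ∘ π := by
  rw [← valueSym_eq_valueSym_iff_exists_perm, valueSym_eq_valueSym_iff_card]
  intro x
  have hm : Fintype.card ι + 1 ≠ 0 := by lia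
  have hz := Complex.isPrimitiveRoot_exp _ hm
  set z := Complex.exp (2 * Real.pi * Complex.I / ((Fintype.card ι + 1 : ℕ) : ℂ))
  let t : κ → ℂ := fun l => if l = x then z else 1
  have ht (l) : ‖t l‖ = 1 := by
    by_cases hl : l = x <;> simp [t, hl, hz.norm'_eq_one hm]
  have hprod : ∏ i, t (a i) = ∏ i, t (b i) := by
    have h := congrFun₂ (hY ⟨_, diagonal_mem_unitaryGroup ht⟩).eq a b
    rw [tensorPower_diagonal, Matrix.mul_diagonal, Matrix.diagonal_mul, mul_comm] at h
    exact (mul_right_cancel₀ hab h).symm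
  simp only [t, Finset.prod_ite, Finset.prod_const, one_pow, mul_one,
    ← Fintype.card_subtype] at hprod
  exact hz.pow_inj (Nat.lt_succ_of_le (Fintype.card_subtype_le _))
    (Nat.lt_succ_of_le (Fintype.card_subtype_le _)) hprod

theorem commute_tensorPower_diagonal_of_unitary
    (hY : ∀ U : Matrix.unitaryGroup κ ℂ, Commute Y (tensorPower ι U.1)) (d : κ → ℂ) :
    Commute Y (tensorPower ι (Matrix.diagonal d)) := by
  rw [tensorPower_diagonal]
  ext a b
  rw [Matrix.mul_diagonal, Matrix.diagonal_mul, mul_comm]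
  by_cases hab : Y a b = 0
  · simp [hab]
  · obtain ⟨π, rfl⟩ := exists_perm_of_commute_tensorPower_unitary hY hab
    congr 1
    exact (Equiv.prod_comp π fun i => d (b i)).symm

/-- The `0`-`1` matrix of `φ` is in general not unitary, but it is the product of a unitary and a
diagonal matrix, so `Y` commutes with its tensor power as well. -/
theorem apply_comp_eq_sum_of_commute_tensorPower_unitary
    (hY : ∀ U : Matrix.unitaryGroup κ ℂ, Commute Y (tensorPower ι U.1)) (φ : κ → κ)
    (a b : ι → κ) : Y (φ ∘ a) b = ∑ c with φ ∘ c = b, Y a c := by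
  obtain ⟨U, d, hφ⟩ := exists_eq_unitary_mul_diagonal (isDiag_star_mul_one_submatrix (A := ℂ) φ)
  have hcomm : Commute Y (tensorPower ι ((1 : Matrix κ κ ℂ).submatrix φ id)) := by
    rw [hφ, map_mul]
    exact (hY U).mul_right (commute_tensorPower_diagonal_of_unitary hY d)
  have h := congrFun₂ hcomm.eq a b
  simpa [Matrix.mul_apply, tensorPower_submatrix, Matrix.one_apply, ← Finset.sum_filter]
    using h.symm

theorem apply_eq_sum_perm_of_commute_tensorPower_unitary
    (hY : ∀ U : Matrix.unitaryGroup κ ℂ, Commute Y (tensorPower ι U.1)) {u : ι → κ}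
    (hu : Function.Injective u) (a b : ι → κ) :
    Y a b = ∑ π : Equiv.Perm ι, if a ∘ π = b then Y u (u ∘ π) else 0 := by
  obtain ⟨φ, rfl⟩ : ∃ φ : κ → κ, φ ∘ u = a :=
    ⟨Function.extend u a id, funext fun j => hu.extend_apply a id j⟩
  rw [apply_comp_eq_sum_of_commute_tensorPower_unitary hY, Finset.sum_filter]
  symm
  refine Finset.sum_of_injOn (fun π : Equiv.Perm ι => u ∘ π) (fun π _ π' _ h => ?_) (by simp)
    (fun c _ hc => ?_) fun π _ => rfl
  · exact Equiv.ext fun i => hu (congrFun h i)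
  · have : Y u c = 0 := by
      by_contra hne
      obtain ⟨π, rfl⟩ := exists_perm_of_commute_tensorPower_unitary hY hne
      exact hc ⟨π⁻¹, by simp, by ext; simp⟩
    simp [this]

end SchurWeyl

section HaarIntegrals

variable {ι κ : Type*} [Fintype ι] [DecidableEq ι] [Fintype κ] [DecidableEq κ]

variable [MeasurableSpace (Matrix.unitaryGroup κ ℂ)] [BorelSpace (Matrix.unitaryGroup κ ℂ)]
  (μ : Measure (Matrix.unitaryGroup κ ℂ))

open scoped Matrix.Norms.L2Operator in
theorem integral_tensorPower_mul_star [IsFiniteMeasure μ] [μ.IsMulLeftInvariant] {u : ι → κ}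
    (hu : Function.Injective u) (a b c d : ι → κ) :
    ∫ θ : Matrix.unitaryGroup κ ℂ, tensorPower ι θ.1 a b * star (tensorPower ι θ.1 c d) ∂μ
      = ∑ π : Equiv.Perm ι, if a ∘ π = c then
          ∫ θ : Matrix.unitaryGroup κ ℂ,
            tensorPower ι θ.1 u b * star (tensorPower ι θ.1 (u ∘ π) d) ∂μ else 0 := by
  let ρ : Matrix.unitaryGroup κ ℂ →* Matrix (ι → κ) (ι → κ) ℂ :=
    (tensorPower ι).comp (Matrix.unitaryGroup κ ℂ).subtype
  let F (θ : Matrix.unitaryGroup κ ℂ) : Matrix (ι → κ) (ι → κ) ℂ :=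
    ρ θ * Matrix.single b d 1 * ρ θ⁻¹
  have hF : Integrable F μ := by
    have hρ : Continuous ρ := continuous_tensorPower.comp continuous_subtype_val
    exact integrable_of_continuous_of_compactSpace μ
      ((hρ.mul continuous_const).mul (hρ.comp continuous_inv))
  have hentry (a' c') : (∫ θ, F θ ∂μ) a' c' =
      ∫ θ : Matrix.unitaryGroup κ ℂ, tensorPower ι θ.1 a' b * star (tensorPower ι θ.1 c' d) ∂μ := by
    calc _ = ∫ θ, F θ a' c' ∂μ :=
        ((Matrix.entryLinearMap ℂ ℂ a' c').toContinuousLinearMap.integral_comp_comm hF).symm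
    _ = _ := by
      congr with θ
      simp [F, ρ, tensorPower_star, Matrix.mul_apply, Matrix.single_apply, ite_and]
  simp only [← hentry]
  exact apply_eq_sum_perm_of_commute_tensorPower_unitary
    (fun U => commute_integral_conj μ ρ hF U) hu a c

theorem integrable_tensorPower_mul_star [IsFiniteMeasure μ] (a b c d : ι → κ) :
    Integrable (fun θ : Matrix.unitaryGroup κ ℂ =>
      tensorPower ι θ.1 a b * star (tensorPower ι θ.1 c d)) μ :=
  have hcont := continuous_tensorPower.comp continuous_subtype_val
  integrable_of_continuous_of_compactSpace μ
    ((hcont.matrix_elem a b).mul (hcont.matrix_elem c d).star)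

theorem integral_permTrace_mul_star [IsProbabilityMeasure μ] [μ.IsMulLeftInvariant]
    (hcard : Fintype.card ι ≤ Fintype.card κ) (σ τ : Equiv.Perm ι) :
    ∫ θ : Matrix.unitaryGroup κ ℂ, permTrace σ θ.1 * star (permTrace τ θ.1) ∂μ
      = Fintype.card {π : Equiv.Perm ι // σ * π = π * τ} := by
  have hint := integrable_tensorPower_mul_star (ι := ι) μ
  obtain ⟨u⟩ := Function.Embedding.nonempty_of_card_le hcard
  have hunitary (θ : Matrix.unitaryGroup κ ℂ) : θ.1 * star θ.1 = 1 :=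
    Unitary.mul_star_self_of_mem θ.2
  have hcomp (π : Equiv.Perm ι) (a d : ι → κ) :
      (a ∘ σ) ∘ π = d ∘ τ ↔ d ∘ ⇑(τ * π⁻¹ * σ⁻¹) = a := by
    simp only [funext_iff, Function.comp_apply]
    exact (σ * π).forall_congr fun {i} => by simp [eq_comm]
  calc ∫ θ : Matrix.unitaryGroup κ ℂ, permTrace σ θ.1 * star (permTrace τ θ.1) ∂μ
      = ∑ a : ι → κ, ∑ d : ι → κ, ∫ θ : Matrix.unitaryGroup κ ℂ,
          tensorPower ι θ.1 (a ∘ σ) a * star (tensorPower ι θ.1 (d ∘ τ) d) ∂μ := by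
        simp only [permTrace, star_sum, Finset.sum_mul_sum]
        rw [integral_finsetSum _ fun a _ => integrable_finsetSum _ fun _ _ => hint _ _ _ _]
        simp only [integral_finsetSum _ fun _ _ => hint _ _ _ _]
    _ = ∑ π : Equiv.Perm ι, ∑ d : ι → κ, ∫ θ : Matrix.unitaryGroup κ ℂ,
          tensorPower ι θ.1 u (d ∘ ⇑(τ * π⁻¹ * σ⁻¹)) *
            star (tensorPower ι θ.1 (u ∘ π) d) ∂μ := by
        simp only [integral_tensorPower_mul_star μ u.injective (_ ∘ σ), hcomp]
        rw [Finset.sum_comm]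
        conv_rhs => rw [Finset.sum_comm]
        refine Finset.sum_congr rfl fun d _ => ?_
        rw [Finset.sum_comm]
        simp only [Finset.sum_ite_eq, Finset.mem_univ, if_true]
    _ = ∑ π : Equiv.Perm ι, ∫ _ : Matrix.unitaryGroup κ ℂ,
          (if (τ * π⁻¹ * σ⁻¹)⁻¹ = π then (1 : ℂ) else 0) ∂μ := by
        simp only [← integral_finsetSum _ fun _ _ => hint _ _ _ _,
          sum_tensorPower_comp_perm_mul_star (hunitary _) u.injective]
    _ = _ := by
        simp [Fintype.card_subtype, ← mul_assoc, mul_inv_eq_iff_eq_mul]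

theorem integral_norm_sq_sum_mul_permTrace [IsProbabilityMeasure μ] [μ.IsMulLeftInvariant]
    (hcard : Fintype.card ι ≤ Fintype.card κ) {f : Equiv.Perm ι → ℂ}
    (hf : ∀ σ π, f (π * σ * π⁻¹) = f σ) :
    ∫ θ : Matrix.unitaryGroup κ ℂ, ‖∑ σ, f σ * permTrace σ θ.1‖ ^ 2 ∂μ
      = (Fintype.card ι).factorial * ∑ σ, ‖f σ‖ ^ 2 := by
  have hint (σ τ : Equiv.Perm ι) : Integrable (fun θ : Matrix.unitaryGroup κ ℂ =>
      f σ * star (f τ) * (permTrace σ θ.1 * star (permTrace τ θ.1))) μ :=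
    integrable_of_continuous_of_compactSpace μ <| continuous_const.mul <|
      ((continuous_permTrace σ).comp continuous_subtype_val).mul
        ((continuous_permTrace τ).comp continuous_subtype_val).star
  apply Complex.ofReal_injective
  calc ((∫ θ : Matrix.unitaryGroup κ ℂ, ‖∑ σ, f σ * permTrace σ θ.1‖ ^ 2 ∂μ : ℝ) : ℂ)
      = ∫ θ : Matrix.unitaryGroup κ ℂ, ∑ σ, ∑ τ,
          f σ * star (f τ) * (permTrace σ θ.1 * star (permTrace τ θ.1)) ∂μ := by
        rw [← integral_complex_ofReal]
        congr with θ
        rw [Complex.ofReal_pow, ← Complex.mul_conj', starRingEnd_apply, star_sum,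
          Finset.sum_mul_sum]
        simp only [star_mul', mul_mul_mul_comm]
    _ = ∑ σ, ∑ τ, f σ * star (f τ) * (Fintype.card {π : Equiv.Perm ι // σ * π = π * τ} : ℂ) := by
        rw [integral_finsetSum _ fun σ _ => integrable_finsetSum _ fun τ _ => hint σ τ]
        simp only [integral_finsetSum _ fun τ _ => hint _ τ, integral_const_mul,
          integral_permTrace_mul_star μ hcard]
    _ = _ := by
        simp [sum_sum_mul_card_conj hf, Fintype.card_perm, Complex.mul_conj']

end HaarIntegrals

theorem factorial_mul_sum_prod_extPowTrace (k n R : ℕ) (θ : Matrix.unitaryGroup (Fin R) ℂ) :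
    (n.factorial : ℂ) * ∑ x ∈ Finset.Nat.antidiagonalTuple k n, ∏ i, extPowTrace R θ (x i)
      = ∑ σ : Equiv.Perm (Fin n),
          (Equiv.Perm.sign σ * permTrace σ (1 : Matrix (Fin k) (Fin k) ℂ)) * permTrace σ θ.1 := by
  have hdet := det_one_add_X_smul_pow_card (Fin k) θ.1
  rw [Fintype.card_fin] at hdet
  simp only [extPowTrace]
  rw [sum_antidiagonalTuple_prod_coeff, hdet, factorial_mul_coeff_det_one_add_X_smul]
  simp only [permTrace_kronecker, mul_assoc, mul_comm (permTrace _ θ.1)]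

theorem I_k_eq_choose_of_small_n_general (k R n : ℕ) (hn : n ≤ R)
    (μ : Measure (Matrix.unitaryGroup (Fin R) ℂ)) [μ.IsMulLeftInvariant]
    [IsProbabilityMeasure μ] :
    matrixIntegral k n R μ = (k ^ 2).multichoose n := by
  let f (σ : Equiv.Perm (Fin n)) : ℂ :=
    Equiv.Perm.sign σ * permTrace σ (1 : Matrix (Fin k) (Fin k) ℂ)
  have hf (σ π) : f (π * σ * π⁻¹) = f σ := by
    simp only [f, permTrace_conj, Equiv.Perm.sign_mul, Equiv.Perm.sign_inv]
    rw [mul_right_comm, Int.units_mul_self, one_mul]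
  have hnorm (σ) : ‖f σ‖ ^ 2 = permTrace σ (1 : Matrix (Fin k × Fin k) (Fin k × Fin k) ℝ) := by
    have hsign : ‖((Equiv.Perm.sign σ : ℤ) : ℂ)‖ = 1 := by
      rcases Int.units_eq_one_or (Equiv.Perm.sign σ) with h | h <;> simp [h]
    rw [permTrace_one_prod, norm_mul, hsign, one_mul, permTrace_one, permTrace_one,
      Complex.norm_natCast]
  have hn0 : (n.factorial : ℝ) ≠ 0 := by positivity
  refine mul_left_cancel₀ (pow_ne_zero 2 hn0) ?_
  calc (n.factorial : ℝ) ^ 2 * matrixIntegral k n R μ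
      = ∫ θ : Matrix.unitaryGroup (Fin R) ℂ, ‖∑ σ, f σ * permTrace σ θ.1‖ ^ 2 ∂μ := by
        simp only [matrixIntegral, ← integral_const_mul, f, ← factorial_mul_sum_prod_extPowTrace,
          norm_mul, mul_pow, Complex.norm_natCast]
    _ = n.factorial * ∑ σ, ‖f σ‖ ^ 2 := by
        simpa using integral_norm_sq_sum_mul_permTrace μ (by simpa) hf
    _ = n.factorial ^ 2 * (k ^ 2).multichoose n := by
        simp [hnorm, sum_permTrace_one, sq, mul_assoc]

theorem I_k_eq_choose_of_small_n (k R n : ℕ) (hk : 1 ≤ k) (hR : 1 ≤ R) (hn : n < R)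
    (μ : Measure (Matrix.unitaryGroup (Fin R) ℂ))
    (hμ : μ.IsHaarMeasure) (hprob : IsProbabilityMeasure μ) :
    matrixIntegral k n R μ = Nat.choose (n + k ^ 2 - 1) (k ^ 2 - 1) := by
  have hk2 : 1 ≤ k ^ 2 := Nat.one_le_pow 2 k hk
  rw [I_k_eq_choose_of_small_n_general k R n hn.le, Nat.multichoose_eq, add_comm,
    Nat.choose_symm_of_eq_add (b := k ^ 2 - 1) (by lia)]
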